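/- arXiv:1805.03261 — 3 statements merged into one kernel-verified Lean document; each statement's English description precedes it below -/
import Mathlib

section
/- Let I be a nonempty open real interval, let c, k₁ ∈ ℝ, and let f : ℝ → ℝ be three times continuously differentiable on I. If f satisfies on I the two equations −4k₁²·f·f' + f·f''' + f'·f'' = 0 and (c − k₁²)·f² + 3·f·f'' + 2·(f')² = 0, then f'(s)·((5k₁² + c)·f(s) + 2·f''(s)) = 0 for every s ∈ I. -/
/-!
Differentiating `(c - k₁²) f² + 3 f f'' + 2 f'² = 0` gives
`2 (c - k₁²) f f' + 7 f' f'' + 3 f f''' = 0`. Subtracting three times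
`-4 k₁² f f' + f f''' + f' f'' = 0` cancels the only term with a third derivative, and what is
left, `2 (c + 5 k₁²) f f' + 4 f' f''`, is twice the asserted product.
-/

open Topology

section

variable {𝕜 : Type*} [NontriviallyNormedField 𝕜]

theorem hasDerivAt_iterate_deriv_of_contDiffAt {F : Type*} [NormedAddCommGroup F]
    [NormedSpace 𝕜 F] {f : 𝕜 → F} {s : 𝕜} {n : WithTop ℕ∞} {m : ℕ} (hf : ContDiffAt 𝕜 n f s)
    (hmn : m < n) : HasDerivAt (deriv^[m] f) (deriv^[m + 1] f s) s := by
  have hdiff : DifferentiableAt 𝕜 (iteratedDeriv m f) s := by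
    simpa [differentiableWithinAt_univ] using
      hf.contDiffWithinAt.differentiableWithinAt_iteratedDerivWithin (s := Set.univ)
        hmn (by simp)
  rw [← iteratedDeriv_eq_iterate, ← iteratedDeriv_eq_iterate, iteratedDeriv_succ]
  exact hdiff.hasDerivAt

theorem hasDerivAt_sq_add_mul_deriv_two_add_deriv_sq {f f' f'' : 𝕜 → 𝕜} {f''' s : 𝕜}
    (hf : HasDerivAt f (f' s) s) (hf' : HasDerivAt f' (f'' s) s) (hf'' : HasDerivAt f'' f''' s)
    (a b d : 𝕜) :
    HasDerivAt (fun x ↦ a * f x ^ 2 + b * f x * f'' x + d * f' x ^ 2)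
      (2 * a * f s * f' s + (b + 2 * d) * f' s * f'' s + b * f s * f''') s := by
  have hsum := (((hf.fun_pow 2).const_mul a).fun_add ((hf.const_mul b).fun_mul hf'')).fun_add
    ((hf'.fun_pow 2).const_mul d)
  refine hsum.congr_deriv ?_
  push_cast
  ring

theorem bi_f_harmonic_factorization_general [NeZero (2 : 𝕜)] {c k₁ s : 𝕜} {f f' f'' : 𝕜 → 𝕜}
    {f''' : 𝕜} (hf : HasDerivAt f (f' s) s) (hf' : HasDerivAt f' (f'' s) s)
    (hf'' : HasDerivAt f'' f''' s)
    (h₁ : -4 * k₁ ^ 2 * f s * f' s + f s * f''' + f' s * f'' s = 0)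
    (h₂ : ∀ᶠ x in 𝓝 s, (c - k₁ ^ 2) * f x ^ 2 + 3 * f x * f'' x + 2 * f' x ^ 2 = 0) :
    f' s * ((5 * k₁ ^ 2 + c) * f s + 2 * f'' s) = 0 := by
  have h₂_deriv : 2 * (c - k₁ ^ 2) * f s * f' s + (3 + 2 * 2) * f' s * f'' s
      + 3 * f s * f''' = 0 :=
    (hasDerivAt_sq_add_mul_deriv_two_add_deriv_sq hf hf' hf'' (c - k₁ ^ 2) 3 2).unique
      ((hasDerivAt_const s 0).congr_of_eventuallyEq h₂)
  have h_two_mul : 2 * (f' s * ((5 * k₁ ^ 2 + c) * f s + 2 * f'' s)) = 0 := by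
    linear_combination h₂_deriv - 3 * h₁
  exact (mul_eq_zero_iff_left two_ne_zero).mp h_two_mul

end

/-- For a curve with constant first curvature `k₁` and vanishing second curvature in a
space form of curvature `c`: if `f` satisfies `-4k₁²ff' + ff''' + f'f'' = 0` and
`(c - k₁²)f² + 3ff'' + 2(f')² = 0` on a nonempty open interval `I`, then
`f' * ((5k₁² + c) f + 2 f'') = 0` on `I`. -/
theorem bi_f_harmonic_factorization
    (I : Set ℝ) (hIopen : IsOpen I) (hIne : I.Nonempty) (hIconn : I.OrdConnected)
    (c k₁ : ℝ) (f : ℝ → ℝ) (hf : ContDiffOn ℝ 3 f I)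
    (h1 : ∀ s ∈ I, -4 * k₁ ^ 2 * f s * deriv f s + f s * deriv (deriv (deriv f)) s
        + deriv f s * deriv (deriv f) s = 0)
    (h2 : ∀ s ∈ I, (c - k₁ ^ 2) * f s ^ 2 + 3 * f s * deriv (deriv f) s
        + 2 * deriv f s ^ 2 = 0) :
    ∀ s ∈ I, deriv f s * ((5 * k₁ ^ 2 + c) * f s + 2 * deriv (deriv f) s) = 0 := by
  intro s hs
  have hI : I ∈ 𝓝 s := hIopen.mem_nhds hs
  have hderiv (m : ℕ) (hm : (m : WithTop ℕ∞) < 3) :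
      HasDerivAt (deriv^[m] f) (deriv^[m + 1] f s) s :=
    hasDerivAt_iterate_deriv_of_contDiffAt (hf.contDiffAt hI) hm
  exact bi_f_harmonic_factorization_general (hderiv 0 (by norm_num)) (hderiv 1 (by norm_num))
    (hderiv 2 (by norm_num)) (h1 s hs) (Filter.eventually_of_mem hI h2)
end

section
/- Let I be a nonempty open real interval, let k₁ > 0 be a real constant, let k₂ : ℝ → ℝ be smooth, strictly positive and nonconstant on I, let k₃ : ℝ → ℝ be a function on I, and let f : ℝ → ℝ be smooth and strictly positive on I. Then the system on I: (i) −4k₁²·f·f' + f·f''' + f'·f'' = 0, (ii) −k₁²·f² − k₂²·f² + 3·f·f'' + 2·(f')² = 0, (iii) k₂'·f + 4·k₂·f' = 0, (iv) k₂·k₃ = 0, holds if and only if there exists c > 0 with f = c·k₂^(−1/4) on I, k₃ = 0 on I, and the curvatures satisfy on I: 32·k₁²·k₂²·k₂' − 25·(k₂')³ + 32·k₂·k₂'·k₂'' − 8·k₂²·k₂''' = 0 and 16·k₁²·k₂² + 16·k₂⁴ − 17·(k₂')² + 12·k₂·k₂'' = 0. -/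
/-!
Equation (iii) is the linear relation `k₂ f' = -(1/4) f k₂'`, whose positive solutions are
`f = c k₂ ^ (-1/4)`. Differentiating this relation twice expresses `k₂² f''` and `k₂³ f'''` as `f`
times polynomials in the derivatives of `k₂`. Substituting these in (i) and (ii) leaves a nonzero
multiple of `f²` times the two curvature equations.
-/

section LinearRelation

variable {𝕜 : Type*} [NontriviallyNormedField 𝕜] {I : Set 𝕜} {k f : 𝕜 → 𝕜} {a s : 𝕜}

theorem sq_mul_deriv_deriv_eq_of_mul_deriv_eq (hI : IsOpen I) (hk : ContDiffOn 𝕜 2 k I)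
    (hf : ContDiffOn 𝕜 2 f I) (h : ∀ t ∈ I, k t * deriv f t = a * f t * deriv k t) (hs : s ∈ I) :
    k s ^ 2 * deriv (deriv f) s
      = a * f s * ((a - 1) * deriv k s ^ 2 + k s * deriv (deriv k) s) := by
  have hIs := hI.mem_nhds hs
  have dk := (hk.differentiableOn two_ne_zero).hasDerivAt hIs
  have dk' := ((hk.deriv_of_isOpen (m := 1) hI (by norm_num)).differentiableOn
    one_ne_zero).hasDerivAt hIs
  have df := (hf.differentiableOn two_ne_zero).hasDerivAt hIs
  have df' := ((hf.deriv_of_isOpen (m := 1) hI (by norm_num)).differentiableOn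
    one_ne_zero).hasDerivAt hIs
  have hderiv : deriv k s * deriv f s + k s * deriv (deriv f) s
      = a * deriv f s * deriv k s + a * f s * deriv (deriv k) s :=
    (dk.fun_mul df').unique
      (((df.const_mul a).fun_mul dk').congr_of_eventuallyEq (Set.EqOn.eventuallyEq_of_mem h hIs))
  linear_combination k s * hderiv + (a - 1) * deriv k s * h s hs

theorem cube_mul_deriv_deriv_deriv_eq_of_mul_deriv_eq (hI : IsOpen I) (hk : ContDiffOn 𝕜 3 k I)
    (hf : ContDiffOn 𝕜 3 f I) (h : ∀ t ∈ I, k t * deriv f t = a * f t * deriv k t) (hs : s ∈ I) :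
    k s ^ 3 * deriv (deriv (deriv f)) s
      = a * f s * ((a - 1) * (a - 2) * deriv k s ^ 3
          + 3 * (a - 1) * k s * deriv k s * deriv (deriv k) s
          + k s ^ 2 * deriv (deriv (deriv k)) s) := by
  have hIs := hI.mem_nhds hs
  have hk' : ContDiffOn 𝕜 2 (deriv k) I := hk.deriv_of_isOpen hI (by norm_num)
  have hf' : ContDiffOn 𝕜 2 (deriv f) I := hf.deriv_of_isOpen hI (by norm_num)
  have dk := (hk.differentiableOn three_ne_zero).hasDerivAt hIs
  have dk' := (hk'.differentiableOn two_ne_zero).hasDerivAt hIs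
  have dk'' := ((hk'.deriv_of_isOpen (m := 1) hI (by norm_num)).differentiableOn
    one_ne_zero).hasDerivAt hIs
  have df := (hf.differentiableOn three_ne_zero).hasDerivAt hIs
  have df'' := ((hf'.deriv_of_isOpen (m := 1) hI (by norm_num)).differentiableOn
    one_ne_zero).hasDerivAt hIs
  have hsecond : ∀ t ∈ I, k t ^ 2 * deriv (deriv f) t
      = a * f t * ((a - 1) * deriv k t ^ 2 + k t * deriv (deriv k) t) := fun t ht =>
    sq_mul_deriv_deriv_eq_of_mul_deriv_eq hI (hk.of_le (by norm_num)) (hf.of_le (by norm_num)) h ht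
  have hderiv : 2 * k s * deriv k s * deriv (deriv f) s + k s ^ 2 * deriv (deriv (deriv f)) s
      = a * deriv f s * ((a - 1) * deriv k s ^ 2 + k s * deriv (deriv k) s)
        + a * f s * ((a - 1) * (2 * deriv k s * deriv (deriv k) s)
          + (deriv k s * deriv (deriv k) s + k s * deriv (deriv (deriv k)) s)) := by
    simpa using ((dk.fun_pow 2).fun_mul df'').unique
      (((df.const_mul a).fun_mul (((dk'.fun_pow 2).const_mul (a - 1)).fun_add
        (dk.fun_mul dk''))).congr_of_eventuallyEq (Set.EqOn.eventuallyEq_of_mem hsecond hIs))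
  linear_combination k s * hderiv - 2 * deriv k s * hsecond s hs
    + a * ((a - 1) * deriv k s ^ 2 + k s * deriv (deriv k) s) * h s hs

end LinearRelation

section RealPower

variable {I : Set ℝ} {k f : ℝ → ℝ} {a s : ℝ}

theorem hasDerivAt_mul_rpow_neg (hf : DifferentiableAt ℝ f s) (hk : DifferentiableAt ℝ k s)
    (hks : 0 < k s) :
    HasDerivAt (fun t => f t * k t ^ (-a))
      (k s ^ (-a - 1) * (k s * deriv f s - a * f s * deriv k s)) s := by
  have hpow : k s ^ (-a) = k s ^ (-a - 1) * k s := by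
    rw [← Real.rpow_add_one hks.ne', sub_add_cancel]
  refine (hf.hasDerivAt.fun_mul (hk.hasDerivAt.rpow_const (Or.inl hks.ne'))).congr_deriv ?_
  rw [hpow]
  ring

theorem forall_mul_deriv_eq_iff_exists_eq_mul_rpow (hI : IsOpen I) (hconn : IsPreconnected I)
    (hk : DifferentiableOn ℝ k I) (hkpos : ∀ s ∈ I, 0 < k s) (hf : DifferentiableOn ℝ f I) :
    (∀ s ∈ I, k s * deriv f s = a * f s * deriv k s) ↔
      ∃ c, ∀ s ∈ I, f s = c * k s ^ a := by
  have hderiv : ∀ s ∈ I, HasDerivAt (fun t => f t * k t ^ (-a))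
      (k s ^ (-a - 1) * (k s * deriv f s - a * f s * deriv k s)) s := fun s hs =>
    hasDerivAt_mul_rpow_neg (hf.differentiableAt (hI.mem_nhds hs))
      (hk.differentiableAt (hI.mem_nhds hs)) (hkpos s hs)
  have hquot (c : ℝ) : ∀ s ∈ I, f s = c * k s ^ a ↔ f s * k s ^ (-a) = c := fun s hs => by
    rw [Real.rpow_neg (hkpos s hs).le, ← div_eq_mul_inv,
      div_eq_iff (Real.rpow_pos_of_pos (hkpos s hs) a).ne']
  constructor
  · intro h
    obtain ⟨c, hc⟩ := hI.exists_is_const_of_deriv_eq_zero hconn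
      (fun s hs => (hderiv s hs).differentiableAt.differentiableWithinAt)
      (fun s hs => by simp [(hderiv s hs).deriv, h s hs])
    exact ⟨c, fun s hs => (hquot c s hs).2 (hc s hs)⟩
  · rintro ⟨c, hc⟩ s hs
    have hconst : (fun t => f t * k t ^ (-a)) =ᶠ[nhds s] fun _ => c :=
      Set.EqOn.eventuallyEq_of_mem (fun t ht => (hquot c t ht).1 (hc t ht)) (hI.mem_nhds hs)
    have hzero := (hderiv s hs).unique ((hasDerivAt_const s c).congr_of_eventuallyEq hconst)
    exact sub_eq_zero.1
      ((mul_eq_zero.1 hzero).resolve_left (Real.rpow_pos_of_pos (hkpos s hs) _).ne')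

theorem forall_mul_deriv_eq_iff_exists_pos_eq_mul_rpow (hI : IsOpen I) (hne : I.Nonempty)
    (hconn : IsPreconnected I) (hk : DifferentiableOn ℝ k I) (hkpos : ∀ s ∈ I, 0 < k s)
    (hf : DifferentiableOn ℝ f I) (hfpos : ∀ s ∈ I, 0 < f s) :
    (∀ s ∈ I, k s * deriv f s = a * f s * deriv k s) ↔
      ∃ c, 0 < c ∧ ∀ s ∈ I, f s = c * k s ^ a := by
  rw [forall_mul_deriv_eq_iff_exists_eq_mul_rpow hI hconn hk hkpos hf]
  refine exists_congr fun c => (and_iff_right_of_imp fun hc => ?_).symm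
  obtain ⟨s, hs⟩ := hne
  exact pos_of_mul_pos_left (hc s hs ▸ hfpos s hs) (Real.rpow_nonneg (hkpos s hs).le a)

end RealPower

section CurvatureEquations

variable {I : Set ℝ} {k₁ s : ℝ} {k₂ f : ℝ → ℝ}

theorem tangent_equation_iff_third_order_curvature_equation (hI : IsOpen I)
    (hk₂ : ContDiffOn ℝ 3 k₂ I) (hf : ContDiffOn ℝ 3 f I)
    (h : ∀ t ∈ I, k₂ t * deriv f t = -(1 / 4) * f t * deriv k₂ t)
    (hs : s ∈ I) (hk₂s : k₂ s ≠ 0) (hfs : f s ≠ 0) :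
    -4 * k₁ ^ 2 * f s * deriv f s + f s * deriv (deriv (deriv f)) s
        + deriv f s * deriv (deriv f) s = 0 ↔
      32 * k₁ ^ 2 * k₂ s ^ 2 * deriv k₂ s - 25 * deriv k₂ s ^ 3
        + 32 * k₂ s * deriv k₂ s * deriv (deriv k₂) s
        - 8 * k₂ s ^ 2 * deriv (deriv (deriv k₂)) s = 0 := by
  have hsecond := sq_mul_deriv_deriv_eq_of_mul_deriv_eq hI (hk₂.of_le (by norm_num))
    (hf.of_le (by norm_num)) h hs
  have hthird := cube_mul_deriv_deriv_deriv_eq_of_mul_deriv_eq hI hk₂ hf h hs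
  have hproportional :
      32 * k₂ s ^ 3 * (-4 * k₁ ^ 2 * f s * deriv f s + f s * deriv (deriv (deriv f)) s
        + deriv f s * deriv (deriv f) s) =
      f s ^ 2 * (32 * k₁ ^ 2 * k₂ s ^ 2 * deriv k₂ s - 25 * deriv k₂ s ^ 3
        + 32 * k₂ s * deriv k₂ s * deriv (deriv k₂) s
        - 8 * k₂ s ^ 2 * deriv (deriv (deriv k₂)) s) := by
    linear_combination (-128 * k₁ ^ 2 * f s * k₂ s ^ 2 + 32 * k₂ s ^ 2 * deriv (deriv f) s) * h s hs
      + 32 * f s * hthird - 8 * f s * deriv k₂ s * hsecond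
  rw [← mul_eq_zero_iff_left (show 32 * k₂ s ^ 3 ≠ 0 by positivity), hproportional,
    mul_eq_zero_iff_left (pow_ne_zero 2 hfs)]

theorem normal_equation_iff_second_order_curvature_equation (hI : IsOpen I)
    (hk₂ : ContDiffOn ℝ 2 k₂ I) (hf : ContDiffOn ℝ 2 f I)
    (h : ∀ t ∈ I, k₂ t * deriv f t = -(1 / 4) * f t * deriv k₂ t)
    (hs : s ∈ I) (hk₂s : k₂ s ≠ 0) (hfs : f s ≠ 0) :
    -k₁ ^ 2 * f s ^ 2 - k₂ s ^ 2 * f s ^ 2 + 3 * f s * deriv (deriv f) s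
        + 2 * deriv f s ^ 2 = 0 ↔
      16 * k₁ ^ 2 * k₂ s ^ 2 + 16 * k₂ s ^ 4 - 17 * deriv k₂ s ^ 2
        + 12 * k₂ s * deriv (deriv k₂) s = 0 := by
  have hsecond := sq_mul_deriv_deriv_eq_of_mul_deriv_eq hI hk₂ hf h hs
  have hproportional :
      -16 * k₂ s ^ 2 * (-k₁ ^ 2 * f s ^ 2 - k₂ s ^ 2 * f s ^ 2 + 3 * f s * deriv (deriv f) s
        + 2 * deriv f s ^ 2) =
      f s ^ 2 * (16 * k₁ ^ 2 * k₂ s ^ 2 + 16 * k₂ s ^ 4 - 17 * deriv k₂ s ^ 2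
        + 12 * k₂ s * deriv (deriv k₂) s) := by
    linear_combination -48 * f s * hsecond
      - 32 * (k₂ s * deriv f s - 1 / 4 * f s * deriv k₂ s) * h s hs
  rw [← mul_eq_zero_iff_left (show -16 * k₂ s ^ 2 ≠ 0 by simpa using hk₂s), hproportional,
    mul_eq_zero_iff_left (pow_ne_zero 2 hfs)]

end CurvatureEquations

theorem bi_f_harmonic_euclidean_case_IV_general
    {I : Set ℝ} (hIopen : IsOpen I) (hIne : I.Nonempty) (hIconn : IsPreconnected I)
    (k₁ : ℝ) {k₂ : ℝ → ℝ} (hk₂ : ContDiffOn ℝ 3 k₂ I) (hk₂pos : ∀ s ∈ I, 0 < k₂ s)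
    (k₃ : ℝ → ℝ) {f : ℝ → ℝ} (hf : ContDiffOn ℝ 3 f I) (hfpos : ∀ s ∈ I, 0 < f s) :
    ((∀ s ∈ I, -4 * k₁ ^ 2 * f s * deriv f s + f s * deriv (deriv (deriv f)) s
        + deriv f s * deriv (deriv f) s = 0) ∧
     (∀ s ∈ I, -k₁ ^ 2 * f s ^ 2 - k₂ s ^ 2 * f s ^ 2 + 3 * f s * deriv (deriv f) s
        + 2 * deriv f s ^ 2 = 0) ∧
     (∀ s ∈ I, deriv k₂ s * f s + 4 * k₂ s * deriv f s = 0) ∧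
     (∀ s ∈ I, k₂ s * k₃ s = 0)) ↔
      ((∃ c : ℝ, 0 < c ∧ ∀ s ∈ I, f s = c * k₂ s ^ (-(1 / 4 : ℝ))) ∧
       (∀ s ∈ I, k₃ s = 0) ∧
       (∀ s ∈ I, 32 * k₁ ^ 2 * k₂ s ^ 2 * deriv k₂ s - 25 * deriv k₂ s ^ 3
          + 32 * k₂ s * deriv k₂ s * deriv (deriv k₂) s
          - 8 * k₂ s ^ 2 * deriv (deriv (deriv k₂)) s = 0) ∧
       (∀ s ∈ I, 16 * k₁ ^ 2 * k₂ s ^ 2 + 16 * k₂ s ^ 4 - 17 * deriv k₂ s ^ 2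
          + 12 * k₂ s * deriv (deriv k₂) s = 0)) := by
  have hbinormal : (∀ s ∈ I, deriv k₂ s * f s + 4 * k₂ s * deriv f s = 0) ↔
      ∀ s ∈ I, k₂ s * deriv f s = -(1 / 4) * f s * deriv k₂ s :=
    forall₂_congr fun s _ =>
      ⟨fun h => by linear_combination h / 4, fun h => by linear_combination 4 * h⟩
  have htrinormal : (∀ s ∈ I, k₂ s * k₃ s = 0) ↔ ∀ s ∈ I, k₃ s = 0 :=
    forall₂_congr fun s hs => mul_eq_zero_iff_left (hk₂pos s hs).ne'
  rw [hbinormal, htrinormal, ← forall_mul_deriv_eq_iff_exists_pos_eq_mul_rpow hIopen hIne hIconn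
    (hk₂.differentiableOn three_ne_zero) hk₂pos (hf.differentiableOn three_ne_zero) hfpos]
  have htangent (h : ∀ s ∈ I, k₂ s * deriv f s = -(1 / 4) * f s * deriv k₂ s) :=
    forall₂_congr fun s (hs : s ∈ I) =>
      tangent_equation_iff_third_order_curvature_equation (k₁ := k₁)
        hIopen hk₂ hf h hs (hk₂pos s hs).ne' (hfpos s hs).ne'
  have hnormal (h : ∀ s ∈ I, k₂ s * deriv f s = -(1 / 4) * f s * deriv k₂ s) :=
    forall₂_congr fun s (hs : s ∈ I) =>
      normal_equation_iff_second_order_curvature_equation (k₁ := k₁)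
        hIopen (hk₂.of_le (by norm_num)) (hf.of_le (by norm_num)) h hs (hk₂pos s hs).ne'
        (hfpos s hs).ne'
  tauto

/-- Case IV in Euclidean space: for `k₁ = const > 0`, `k₂` smooth positive nonconstant,
the bi-f-harmonic system holds iff `f = c k₂^(-1/4)`, `k₃ = 0`, and `k₁, k₂` satisfy the
two displayed curvature ODEs. -/
theorem bi_f_harmonic_euclidean_case_IV
    (I : Set ℝ) (hIopen : IsOpen I) (hIne : I.Nonempty) (hIconn : I.OrdConnected)
    (k₁ : ℝ) (hk₁ : 0 < k₁)
    (k₂ : ℝ → ℝ) (hk₂ : ContDiffOn ℝ (⊤ : ℕ∞) k₂ I) (hk₂pos : ∀ s ∈ I, 0 < k₂ s)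
    (hk₂nc : ¬ ∃ a : ℝ, ∀ s ∈ I, k₂ s = a)
    (k₃ : ℝ → ℝ)
    (f : ℝ → ℝ) (hf : ContDiffOn ℝ (⊤ : ℕ∞) f I) (hfpos : ∀ s ∈ I, 0 < f s) :
    ((∀ s ∈ I, -4 * k₁ ^ 2 * f s * deriv f s + f s * deriv (deriv (deriv f)) s
        + deriv f s * deriv (deriv f) s = 0) ∧
     (∀ s ∈ I, -k₁ ^ 2 * f s ^ 2 - k₂ s ^ 2 * f s ^ 2 + 3 * f s * deriv (deriv f) s
        + 2 * deriv f s ^ 2 = 0) ∧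
     (∀ s ∈ I, deriv k₂ s * f s + 4 * k₂ s * deriv f s = 0) ∧
     (∀ s ∈ I, k₂ s * k₃ s = 0)) ↔
      ((∃ c : ℝ, 0 < c ∧ ∀ s ∈ I, f s = c * k₂ s ^ (-(1 / 4 : ℝ))) ∧
       (∀ s ∈ I, k₃ s = 0) ∧
       (∀ s ∈ I, 32 * k₁ ^ 2 * k₂ s ^ 2 * deriv k₂ s - 25 * deriv k₂ s ^ 3
          + 32 * k₂ s * deriv k₂ s * deriv (deriv k₂) s
          - 8 * k₂ s ^ 2 * deriv (deriv (deriv k₂)) s = 0) ∧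
       (∀ s ∈ I, 16 * k₁ ^ 2 * k₂ s ^ 2 + 16 * k₂ s ^ 4 - 17 * deriv k₂ s ^ 2
          + 12 * k₂ s * deriv (deriv k₂) s = 0)) :=
  bi_f_harmonic_euclidean_case_IV_general hIopen hIne hIconn.isPreconnected k₁
    (contDiffOn_infty.1 hk₂ 3) hk₂pos k₃ (contDiffOn_infty.1 hf 3) hfpos
end

section
/- Let I be a nonempty open real interval, let k₁, k₂ : ℝ → ℝ be smooth and strictly positive on I, and let f : ℝ → ℝ be smooth and strictly positive on I. Then 2·k₁'·k₂·f + k₁·k₂'·f + 4·k₁·k₂·f' = 0 at every point of I if and only if there exists a constant c > 0 such that f(s) = c·k₁(s)^(−1/2)·k₂(s)^(−1/4) for all s ∈ I. -/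
/-!
Dividing `2 k₁' k₂ f + k₁ k₂' f + 4 k₁ k₂ f' = 0` by `4 k₁ k₂ f` turns it into
`f'/f = -(1/2) k₁'/k₁ - (1/4) k₂'/k₂`, whose right-hand side is the logarithmic derivative of
`k₁^(-1/2) k₂^(-1/4)`. On an interval, two positive functions have the same logarithmic derivative
exactly when they differ by a positive constant factor.
-/

open Set

section LogDeriv

variable {u v : ℝ → ℝ}

theorem logDeriv_rpow_const {x : ℝ} (hu : DifferentiableAt ℝ u x) (hux : 0 < u x) (p : ℝ) :
    logDeriv (fun t ↦ u t ^ p) x = p * logDeriv u x := by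
  have hpow : u x ^ p ≠ 0 := (Real.rpow_pos_of_pos hux p).ne'
  rw [logDeriv_apply, logDeriv_apply, deriv_rpow_const hu (.inl hux.ne'),
    Real.rpow_sub_one hux.ne']
  field_simp

theorem logDeriv_rpow_mul_rpow {x : ℝ} (hu : DifferentiableAt ℝ u x)
    (hv : DifferentiableAt ℝ v x) (hux : 0 < u x) (hvx : 0 < v x) (p q : ℝ) :
    logDeriv (fun t ↦ u t ^ p * v t ^ q) x = p * logDeriv u x + q * logDeriv v x := by
  rw [logDeriv_mul x (Real.rpow_pos_of_pos hux p).ne' (Real.rpow_pos_of_pos hvx q).ne'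
      (hu.rpow_const (.inl hux.ne')) (hv.rpow_const (.inl hvx.ne')),
    logDeriv_rpow_const hu hux, logDeriv_rpow_const hv hvx]

theorem logDeriv_eqOn_iff_exists_pos {s : Set ℝ} (hs : IsOpen s) (hs' : IsPreconnected s)
    (hu : DifferentiableOn ℝ u s) (hv : DifferentiableOn ℝ v s)
    (hu_pos : ∀ x ∈ s, 0 < u x) (hv_pos : ∀ x ∈ s, 0 < v x) :
    EqOn (logDeriv u) (logDeriv v) s ↔ ∃ c : ℝ, 0 < c ∧ ∀ x ∈ s, u x = c * v x := by
  rw [logDeriv_eqOn_iff hu hv hs hs' (fun x hx ↦ (hv_pos x hx).ne') fun x hx ↦ (hu_pos x hx).ne']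
  constructor
  · rintro ⟨c, -, hc⟩
    obtain rfl | ⟨a, ha⟩ := s.eq_empty_or_nonempty
    · exact ⟨1, one_pos, by simp⟩
    · have hca : 0 < c * v a := (hu_pos a ha).trans_eq (hc ha)
      exact ⟨c, pos_of_mul_pos_left hca (hv_pos a ha).le, hc⟩
  · rintro ⟨c, hc_pos, hc⟩
    exact ⟨c, hc_pos.ne', hc⟩

end LogDeriv

theorem mul_deriv_add_eq_zero_iff_logDeriv_eq {𝕜 𝕜' : Type*} [NontriviallyNormedField 𝕜]
    [NontriviallyNormedField 𝕜'] [NormedAlgebra 𝕜 𝕜'] {u v f : 𝕜 → 𝕜'} {x : 𝕜}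
    (hu : u x ≠ 0) (hv : v x ≠ 0) (hf : f x ≠ 0) (p q : 𝕜') {r : 𝕜'} (hr : r ≠ 0) :
    p * deriv u x * v x * f x + q * u x * deriv v x * f x + r * u x * v x * deriv f x = 0 ↔
      logDeriv f x = -(p / r) * logDeriv u x + -(q / r) * logDeriv v x := by
  have hfactor : p * deriv u x * v x * f x + q * u x * deriv v x * f x
        + r * u x * v x * deriv f x =
      r * u x * v x * f x *
        (logDeriv f x - (-(p / r) * logDeriv u x + -(q / r) * logDeriv v x)) := by
    simp only [logDeriv_apply]
    field_simp
    ring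
  have hcoeff : r * u x * v x * f x ≠ 0 := by simp [*]
  rw [hfactor, mul_eq_zero, or_iff_right hcoeff, sub_eq_zero]

theorem f_eq_k1_rpow_neg_half_mul_k2_rpow_neg_quarter_general
    {I : Set ℝ} (hI : IsOpen I) (hI' : IsPreconnected I) {k₁ k₂ f : ℝ → ℝ}
    (hk₁ : DifferentiableOn ℝ k₁ I) (hk₂ : DifferentiableOn ℝ k₂ I) (hf : DifferentiableOn ℝ f I)
    (hk₁_pos : ∀ s ∈ I, 0 < k₁ s) (hk₂_pos : ∀ s ∈ I, 0 < k₂ s) (hf_pos : ∀ s ∈ I, 0 < f s)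
    (p q : ℝ) {r : ℝ} (hr : r ≠ 0) :
    (∀ s ∈ I, p * deriv k₁ s * k₂ s * f s + q * k₁ s * deriv k₂ s * f s
        + r * k₁ s * k₂ s * deriv f s = 0) ↔
      ∃ c : ℝ, 0 < c ∧ ∀ s ∈ I, f s = c * k₁ s ^ (-(p / r)) * k₂ s ^ (-(q / r)) := by
  let g : ℝ → ℝ := fun s ↦ k₁ s ^ (-(p / r)) * k₂ s ^ (-(q / r))
  have hg : DifferentiableOn ℝ g I :=
    (hk₁.rpow_const fun s hs ↦ .inl (hk₁_pos s hs).ne').mul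
      (hk₂.rpow_const fun s hs ↦ .inl (hk₂_pos s hs).ne')
  have hg_pos (s : ℝ) (hs : s ∈ I) : 0 < g s :=
    mul_pos (Real.rpow_pos_of_pos (hk₁_pos s hs) _) (Real.rpow_pos_of_pos (hk₂_pos s hs) _)
  have h_ode (s : ℝ) (hs : s ∈ I) :
      p * deriv k₁ s * k₂ s * f s + q * k₁ s * deriv k₂ s * f s
        + r * k₁ s * k₂ s * deriv f s = 0 ↔ logDeriv f s = logDeriv g s := by
    rw [mul_deriv_add_eq_zero_iff_logDeriv_eq (hk₁_pos s hs).ne' (hk₂_pos s hs).ne'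
        (hf_pos s hs).ne' p q hr,
      logDeriv_rpow_mul_rpow (hk₁.differentiableAt (hI.mem_nhds hs))
        (hk₂.differentiableAt (hI.mem_nhds hs)) (hk₁_pos s hs) (hk₂_pos s hs)]
  rw [forall₂_congr h_ode]
  simpa only [EqOn, g, mul_assoc] using
    logDeriv_eqOn_iff_exists_pos hI hI' hf hg hf_pos hg_pos

/-- The ODE `2 k₁' k₂ f + k₁ k₂' f + 4 k₁ k₂ f' = 0` on a nonempty open interval, with
`k₁, k₂, f` smooth and positive, holds iff `f = c k₁^(-1/2) k₂^(-1/4)` for some `c > 0`. -/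
theorem f_eq_k1_rpow_neg_half_mul_k2_rpow_neg_quarter
    (I : Set ℝ) (hIopen : IsOpen I) (hIne : I.Nonempty) (hIconn : I.OrdConnected)
    (k₁ k₂ : ℝ → ℝ) (hk₁ : ContDiffOn ℝ (⊤ : ℕ∞) k₁ I) (hk₂ : ContDiffOn ℝ (⊤ : ℕ∞) k₂ I)
    (hk₁pos : ∀ s ∈ I, 0 < k₁ s) (hk₂pos : ∀ s ∈ I, 0 < k₂ s)
    (f : ℝ → ℝ) (hf : ContDiffOn ℝ (⊤ : ℕ∞) f I) (hfpos : ∀ s ∈ I, 0 < f s) :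
    (∀ s ∈ I, 2 * deriv k₁ s * k₂ s * f s + k₁ s * deriv k₂ s * f s
        + 4 * k₁ s * k₂ s * deriv f s = 0) ↔
      ∃ c : ℝ, 0 < c ∧
        ∀ s ∈ I, f s = c * k₁ s ^ (-(1 / 2 : ℝ)) * k₂ s ^ (-(1 / 4 : ℝ)) := by
  simpa only [one_mul, show (2 / 4 : ℝ) = 1 / 2 by norm_num] using
    f_eq_k1_rpow_neg_half_mul_k2_rpow_neg_quarter_general hIopen hIconn.isPreconnected
      (hk₁.differentiableOn (by simp)) (hk₂.differentiableOn (by simp))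
      (hf.differentiableOn (by simp)) hk₁pos hk₂pos hfpos 2 1 four_ne_zero
end
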